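/- arXiv:2508.21205 — 4 statements merged into one kernel-verified Lean document; each statement's English description precedes it below -/
import Mathlib

section
/- Extreme points of the transportation polytope with integer marginals are integer matrices: given K ∈ ℕ and μ, ν : Fin K → ℝ with nonnegative entries all of which are integers (each μ i and ν j lies in the range of the coercion ℤ → ℝ), every extreme point of the convex set of transport plans of (μ, ν) (viewed as a subset of the vector space of K × K real matrices) has all entries integers. -/
/-!
Call an entry of an extreme point `P` fractional if it is not an integer, and suppose the set `S`
of fractional positions is nonempty. Since the marginals are integers, a row or column meeting `S`
meets it at least twice (`exists_ne_fractional`), so if `S` meets `r` rows and `c` columns then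
`2 * r ≤ |S|` and `2 * c ≤ |S|`, hence `r + c ≤ |S|`. The row and column sums of a matrix supported
on `S` are `r + c` linear forms which satisfy a nontrivial linear relation (both families add up to
the total mass), so a dimension count gives a nonzero matrix `D` supported on `S` with all row and
column sums zero (`exists_circulation`). Fractional entries are positive, so `P ± ε D` are transport
plans for small `ε > 0` and `P` is their midpoint, contradicting extremality.
-/

/-- The set of transport plans of `(μ, ν)`, viewed as a subset of the space of
`K × K` real matrices: nonnegative matrices whose `i`-th row sums to `μ i`
and whose `j`-th column sums to `ν j`. -/
def transportPolytope {K : ℕ} (μ ν : Fin K → ℝ) :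
    Set (Matrix (Fin K) (Fin K) ℝ) :=
  {P | (∀ i j, 0 ≤ P i j) ∧ (∀ i, ∑ j, P i j = μ i) ∧ (∀ j, ∑ i, P i j = ν j)}

/-- A finite family of reals with integer sum cannot have exactly one fractional member. -/
lemma exists_ne_fractional {ι : Type*} [Fintype ι] [DecidableEq ι] (f : ι → ℝ)
    (hsum : ∑ i, f i ∈ (Int.castRingHom ℝ).range) (j : ι)
    (hj : f j ∉ (Int.castRingHom ℝ).range) :
    ∃ k, k ≠ j ∧ f k ∉ (Int.castRingHom ℝ).range := by
  by_contra! h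
  apply hj
  rw [← Finset.add_sum_erase _ _ (Finset.mem_univ j)] at hsum
  have h2 : ∑ i ∈ Finset.univ.erase j, f i ∈ (Int.castRingHom ℝ).range :=
    sum_mem fun i hi => h i (Finset.ne_of_mem_erase hi)
  simpa using sub_mem hsum h2

/-- A nonempty set of positions with no isolated position in any row or column supports a nonzero
matrix with vanishing row and column sums. -/
lemma exists_circulation {m n : Type*} [Fintype m] [Fintype n] [DecidableEq m] [DecidableEq n]
    (S : Finset (m × n)) (hne : S.Nonempty)
    (hrow : ∀ p ∈ S, ∃ k, k ≠ p.2 ∧ (p.1, k) ∈ S)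
    (hcol : ∀ p ∈ S, ∃ k, k ≠ p.1 ∧ (k, p.2) ∈ S) :
    ∃ D : m × n → ℝ, D ≠ 0 ∧ (∀ p, p ∉ S → D p = 0) ∧
      (∀ i, ∑ j, D (i, j) = 0) ∧ (∀ j, ∑ i, D (i, j) = 0) := by
  classical
  set R := S.image Prod.fst with hR
  set C := S.image Prod.snd with hC
  have cR : 2 * R.card ≤ S.card := by
    apply Finset.mul_card_image_le_card
    intro a ha
    obtain ⟨p, hp, rfl⟩ := Finset.mem_image.1 ha
    obtain ⟨k, hk, hkS⟩ := hrow p hp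
    refine Finset.one_lt_card.2 ⟨p, by simp [hp], (p.1, k), by simp [hkS], ?_⟩
    intro h
    exact hk (congrArg Prod.snd h).symm
  have cC : 2 * C.card ≤ S.card := by
    apply Finset.mul_card_image_le_card
    intro a ha
    obtain ⟨p, hp, rfl⟩ := Finset.mem_image.1 ha
    obtain ⟨k, hk, hkS⟩ := hcol p hp
    refine Finset.one_lt_card.2 ⟨p, by simp [hp], (k, p.2), by simp [hkS], ?_⟩
    intro h
    exact hk (congrArg Prod.fst h).symm
  let ext : (S → ℝ) →ₗ[ℝ] (m × n → ℝ) := Function.ExtendByZero.linearMap ℝ Subtype.val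
  have ext_mem (x : S → ℝ) (p : S) : ext x p = x p :=
    Subtype.val_injective.extend_apply x 0 p
  have ext_notMem (x : S → ℝ) (p) (hp : p ∉ S) : ext x p = 0 :=
    Function.extend_apply' _ _ _ (by rintro ⟨q, rfl⟩; exact hp q.2)
  let L : (S → ℝ) →ₗ[ℝ] (R → ℝ) × (C → ℝ) :=
    { toFun := fun x => (fun r => ∑ j, ext x (r, j), fun c => ∑ i, ext x (i, c))
      map_add' := fun x y => by
        ext <;> simp [Finset.sum_add_distrib]
      map_smul' := fun a x => by
        ext <;> simp [Finset.mul_sum] }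
  have row0 (x : S → ℝ) (i : m) (hi : i ∉ R) : ∑ j, ext x (i, j) = 0 :=
    Finset.sum_eq_zero fun j _ => ext_notMem _ _ fun h =>
      hi (Finset.mem_image_of_mem Prod.fst h)
  have col0 (x : S → ℝ) (j : n) (hj : j ∉ C) : ∑ i, ext x (i, j) = 0 :=
    Finset.sum_eq_zero fun i _ => ext_notMem _ _ fun h =>
      hj (Finset.mem_image_of_mem Prod.snd h)
  have notInj : ¬ Function.Injective L := by
    intro hinj
    have hle := LinearMap.finrank_le_finrank_of_injective hinj
    have heq : Module.finrank ℝ (S → ℝ) = Module.finrank ℝ ((R → ℝ) × (C → ℝ)) := by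
      apply le_antisymm hle
      simp only [Module.finrank_prod, Module.finrank_fintype_fun_eq_card, Fintype.card_coe]
      omega
    -- `(1, 0)` violates the relation between row sums and column sums.
    obtain ⟨x, hx⟩ :=
      (LinearMap.injective_iff_surjective_of_finrank_eq_finrank heq).1 hinj (1, 0)
    have h1 (r : R) : ∑ j, ext x (r, j) = 1 := congrFun (congrArg Prod.fst hx) r
    have h2 (j : n) : ∑ i, ext x (i, j) = 0 := by
      by_cases hj : j ∈ C
      · exact congrFun (congrArg Prod.snd hx) ⟨j, hj⟩
      · exact col0 x j hj
    have h3 : ∑ i, ∑ j, ext x (i, j) = 0 := by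
      rw [Finset.sum_comm]
      exact Finset.sum_eq_zero fun j _ => h2 j
    obtain ⟨p, hp⟩ := hne
    have h4 : 0 < ∑ i, ∑ j, ext x (i, j) := by
      apply Finset.sum_pos'
      · intro i _
        by_cases hi : i ∈ R
        · rw [h1 ⟨i, hi⟩]
          exact zero_le_one
        · rw [row0 x i hi]
      · refine ⟨p.1, Finset.mem_univ _, ?_⟩
        rw [h1 ⟨p.1, Finset.mem_image_of_mem Prod.fst hp⟩]
        exact zero_lt_one
    exact h4.ne' h3
  rw [injective_iff_map_eq_zero] at notInj
  push Not at notInj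
  obtain ⟨x, hx, hx0⟩ := notInj
  refine ⟨ext x, ?_, ext_notMem x, fun i => ?_, fun j => ?_⟩
  · intro h
    apply hx0
    ext p
    rw [← ext_mem x p, h]
    rfl
  · by_cases hi : i ∈ R
    · exact congrFun (congrArg Prod.fst hx) ⟨i, hi⟩
    · exact row0 x i hi
  · by_cases hj : j ∈ C
    · exact congrFun (congrArg Prod.snd hx) ⟨j, hj⟩
    · exact col0 x j hj

/-- Extreme points of the transportation polytope with integer marginals are
integer matrices. -/
theorem extremePoint_transportPolytope_integral {K : ℕ} (μ ν : Fin K → ℝ)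
    (hμ0 : ∀ i, 0 ≤ μ i) (hν0 : ∀ j, 0 ≤ ν j)
    (hμint : ∀ i, ∃ z : ℤ, μ i = (z : ℝ))
    (hνint : ∀ j, ∃ z : ℤ, ν j = (z : ℝ)) :
    ∀ P ∈ Set.extremePoints ℝ (transportPolytope μ ν),
      ∀ i j, ∃ z : ℤ, P i j = (z : ℝ) := by
  classical
  intro P hP i₀ j₀
  obtain ⟨⟨hpos, hrow, hcol⟩, hext⟩ := mem_extremePoints.1 hP
  by_contra hfrac
  let S : Finset (Fin K × Fin K) :=
    Finset.univ.filter fun p => P p.1 p.2 ∉ (Int.castRingHom ℝ).range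
  have memS (i j) : (i, j) ∈ S ↔ P i j ∉ (Int.castRingHom ℝ).range := by simp [S]
  have hne : S.Nonempty := by
    refine ⟨(i₀, j₀), (memS _ _).2 ?_⟩
    rintro ⟨z, hz⟩
    exact hfrac ⟨z, hz.symm⟩
  obtain ⟨D, hD0, hDS, hDrow, hDcol⟩ := exists_circulation S hne
    (by
      rintro ⟨i, j⟩ hp
      obtain ⟨z, hz⟩ := hμint i
      obtain ⟨k, hk, hk'⟩ := exists_ne_fractional (fun j => P i j)
        ⟨z, by rw [hrow i, hz]; rfl⟩ j ((memS _ _).1 hp)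
      exact ⟨k, hk, (memS _ _).2 hk'⟩)
    (by
      rintro ⟨i, j⟩ hp
      obtain ⟨z, hz⟩ := hνint j
      obtain ⟨k, hk, hk'⟩ := exists_ne_fractional (fun i => P i j)
        ⟨z, by rw [hcol j, hz]; rfl⟩ i ((memS _ _).1 hp)
      exact ⟨k, hk, (memS _ _).2 hk'⟩)
  have hev : ∀ᶠ ε in nhdsWithin (0 : ℝ) (Set.Ioi 0),
      ∀ p : Fin K × Fin K, ε * |D p| ≤ P p.1 p.2 := by
    rw [Filter.eventually_all]
    rintro ⟨i, j⟩
    by_cases hp : (i, j) ∈ S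
    · have hPpos : 0 < P i j := by
        refine lt_of_le_of_ne (hpos i j) fun h => (memS i j).1 hp ?_
        rw [← h]
        exact zero_mem _
      have ht : Filter.Tendsto (fun ε : ℝ => ε * |D (i, j)|) (nhds 0) (nhds 0) := by
        have : Continuous fun ε : ℝ => ε * |D (i, j)| := by fun_prop
        simpa using this.tendsto 0
      exact (ht.mono_left nhdsWithin_le_nhds).eventually_le_const hPpos
    · simp [hDS _ hp, hpos i j]
  obtain ⟨ε, hε, hεpos⟩ := (hev.and self_mem_nhdsWithin).exists
  have hεpos : 0 < ε := hεpos
  have key (s : ℝ) (hs : |s| = ε) :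
      (Matrix.of fun i j => P i j + s * D (i, j)) ∈ transportPolytope μ ν := by
    refine ⟨fun i j => ?_, fun i => ?_, fun j => ?_⟩
    · have h1 := hε (i, j)
      rw [← hs, ← abs_mul] at h1
      have h2 := neg_abs_le (s * D (i, j))
      simp only [Matrix.of_apply]
      linarith
    · simp [Finset.sum_add_distrib, ← Finset.mul_sum, hrow, hDrow]
    · simp [Finset.sum_add_distrib, ← Finset.mul_sum, hcol, hDcol]
  have hmid := hext _ (key ε (abs_of_pos hεpos)) _ (key (-ε) (by rw [abs_neg, abs_of_pos hεpos]))
    ⟨1 / 2, 1 / 2, by norm_num, by norm_num, by norm_num, by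
      ext i j
      simp only [Matrix.add_apply, Matrix.smul_apply, Matrix.of_apply, smul_eq_mul]
      ring⟩
  apply hD0
  funext ⟨i, j⟩
  have h := congrFun (congrFun hmid.1 i) j
  simp only [Matrix.of_apply, add_eq_left, mul_eq_zero] at h
  exact h.resolve_left hεpos.ne'
end

section
/- (Lemma 1(i), integrality of the optimal plan) Given K ∈ ℕ, a cost matrix C : Fin K → Fin K → ℝ, and μ, ν : Fin K → ℝ with every entry equal to 0 or 1 and ∑ i, μ i = ∑ j, ν j, there exists a transport plan Π* of (μ, ν) all of whose entries are 0 or 1, such that the cost of Π* is less than or equal to the cost of every (real-valued) transport plan of (μ, ν); that is, the optimum of the linear program P1 is achieved by a {0,1}-valued plan, so the robots do not split on their paths to the targets. -/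
/-!
Fix a permutation `σ₀` with `ν ∘ σ₀ = μ`, which exists because the supports of `μ` and `ν` have the
same cardinality. Adding the mass `1 - μ i` at `(i, σ₀ i)` turns any transport plan `P` into a
doubly stochastic matrix, which by Birkhoff's theorem is a convex combination of permutation
matrices. A permutation `σ` of positive weight lies in the support of this matrix, which forces
`ν ∘ σ = μ`. Deleting the rows where `μ` vanishes recovers `P`, so the cost of `P` is an average of
the numbers `∑ i, μ i * C i (σ i)` over permutations with `ν ∘ σ = μ`. Such a number is the cost of
the `{0,1}`-valued plan carried by `σ`, so the cheapest of these finitely many plans is optimal.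
-/

/-- A transport plan (coupling) of `(μ, ν)`: a nonnegative matrix whose
`i`-th row sums to `μ i` and whose `j`-th column sums to `ν j`. -/
def IsTransportPlan {K : ℕ} (μ ν : Fin K → ℝ) (P : Fin K → Fin K → ℝ) : Prop :=
  (∀ i j, 0 ≤ P i j) ∧ (∀ i, ∑ j, P i j = μ i) ∧ (∀ j, ∑ i, P i j = ν j)

lemma exists_perm_comp_eq {K : ℕ} (μ ν : Fin K → ℝ)
    (hμ : ∀ i, μ i = 0 ∨ μ i = 1) (hν : ∀ j, ν j = 0 ∨ ν j = 1)
    (hmass : ∑ i, μ i = ∑ j, ν j) :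
    ∃ σ : Equiv.Perm (Fin K), ∀ i, ν (σ i) = μ i := by
  classical
  have key : ∀ f : Fin K → ℝ, (∀ i, f i = 0 ∨ f i = 1) →
      ∑ i, f i = (Fintype.card {i // f i = 1} : ℝ) := by
    intro f hf
    rw [Fintype.card_subtype, Finset.card_filter]
    push_cast
    refine Finset.sum_congr rfl fun i _ => ?_
    rcases hf i with h | h <;> simp [h]
  have hcard : Fintype.card {i // μ i = 1} = Fintype.card {j // ν j = 1} := by
    have h := hmass
    rw [key μ hμ, key ν hν] at h
    exact_mod_cast h
  let e := Fintype.equivOfCardEq hcard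
  refine ⟨e.extendSubtype, fun i => ?_⟩
  rcases hμ i with h | h
  · have h1 : ¬ ν (e.extendSubtype i) = 1 :=
      e.extendSubtype_not_mem i (by rw [h]; norm_num)
    rw [h]
    exact (hν _).resolve_right h1
  · rw [h]
    exact e.extendSubtype_mem i h

/-- The plan carried by `σ` moves the mass `μ i` from `i` to `σ i`. -/
lemma isTransportPlan_of_perm {K : ℕ} (μ ν : Fin K → ℝ) (hμ : ∀ i, μ i = 0 ∨ μ i = 1)
    (σ : Equiv.Perm (Fin K)) (hσ : ∀ i, ν (σ i) = μ i) :
    IsTransportPlan μ ν (fun i j => if σ i = j then μ i else 0) := by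
  refine ⟨fun i j => ?_, fun i => by simp, fun j => ?_⟩
  · dsimp only
    split_ifs
    · rcases hμ i with h | h <;> simp [h]
    · exact le_rfl
  · rw [Finset.sum_eq_single (σ.symm j)]
    · simp [← hσ]
    · intro i _ hi
      refine if_neg ?_
      rintro rfl
      simp at hi
    · simp

/-- Birkhoff decomposition of a transport plan with `{0,1}`-valued marginals: after completing the
plan to a doubly stochastic matrix, only permutations matching `μ` to `ν` get positive weight. -/
lemma exists_perm_decomposition {K : ℕ} (μ ν : Fin K → ℝ)
    (hμ : ∀ i, μ i = 0 ∨ μ i = 1) (hν : ∀ j, ν j = 0 ∨ ν j = 1)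
    (hmass : ∑ i, μ i = ∑ j, ν j) (P : Fin K → Fin K → ℝ) (hP : IsTransportPlan μ ν P) :
    ∃ w : Equiv.Perm (Fin K) → ℝ, (∀ σ, 0 ≤ w σ) ∧ ∑ σ, w σ = 1 ∧
      (∀ σ, 0 < w σ → ∀ i, ν (σ i) = μ i) ∧
      ∀ i j, P i j = ∑ σ, w σ * (if σ i = j then μ i else 0) := by
  classical
  obtain ⟨σ₀, hσ₀⟩ := exists_perm_comp_eq μ ν hμ hν hmass
  obtain ⟨hnn, hrow, hcol⟩ := hP
  have hμ1 : ∀ i, 0 ≤ 1 - μ i := fun i => by rcases hμ i with h | h <;> simp [h]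
  have hrow0 : ∀ i j, μ i = 0 → P i j = 0 := by
    intro i j h
    have h1 := Finset.single_le_sum (fun j _ => hnn i j) (Finset.mem_univ j)
    rw [hrow i, h] at h1
    exact le_antisymm h1 (hnn i j)
  have hcol0 : ∀ i j, ν j = 0 → P i j = 0 := by
    intro i j h
    have h1 := Finset.single_le_sum (fun i _ => hnn i j) (Finset.mem_univ i)
    rw [hcol j, h] at h1
    exact le_antisymm h1 (hnn i j)
  let M : Matrix (Fin K) (Fin K) ℝ := fun i j => P i j + if σ₀ i = j then 1 - μ i else 0
  have hM : M ∈ doublyStochastic ℝ (Fin K) := by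
    rw [mem_doublyStochastic_iff_sum]
    refine ⟨fun i j => ?_, fun i => ?_, fun j => ?_⟩
    · refine add_nonneg (hnn i j) ?_
      split_ifs
      · exact hμ1 i
      · exact le_rfl
    · simp [M, Finset.sum_add_distrib, hrow]
    · have h : ∑ i, (if σ₀ i = j then 1 - μ i else 0) = 1 - ν j := by
        rw [Finset.sum_eq_single (σ₀.symm j)]
        · simp [← hσ₀]
        · intro i _ hi
          rw [if_neg]
          rintro rfl
          simp at hi
        · simp
      simp only [M, Finset.sum_add_distrib, hcol, h]
      ring
  obtain ⟨w, hw0, hw1, hwM⟩ := exists_eq_sum_perm_of_mem_doublyStochastic hM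
  have hentry : ∀ i j, M i j = ∑ σ, w σ * (if σ i = j then 1 else 0) := by
    intro i j
    rw [← hwM, Matrix.sum_apply]
    refine Finset.sum_congr rfl fun σ _ => ?_
    simp [Equiv.Perm.permMatrix, PEquiv.toMatrix_apply, Equiv.toPEquiv_apply]
  refine ⟨w, hw0, hw1, fun σ hσ i => ?_, fun i j => ?_⟩
  · have hpos : 0 < M i (σ i) := by
      refine lt_of_lt_of_le hσ ?_
      rw [hentry]
      have h := Finset.single_le_sum (f := fun τ => w τ * (if τ i = σ i then (1 : ℝ) else 0))
        (fun τ _ => mul_nonneg (hw0 τ) (by split_ifs <;> norm_num)) (Finset.mem_univ σ)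
      simpa using h
    rcases hμ i with h | h
    · -- Row `i` of `P` vanishes, so the only positive entry of `M` in it is the added one.
      have h2 : σ₀ i = σ i := by
        by_contra hne
        simp [M, hrow0 i _ h, hne] at hpos
      rw [← h2, hσ₀]
    · -- Nothing is added in row `i`, so `P i (σ i)` is positive and column `σ i` carries mass.
      rw [h]
      refine (hν _).resolve_left fun h0 => ?_
      simp [M, hcol0 i _ h0, h] at hpos
  · have hPM : P i j = μ i * M i j := by
      rcases hμ i with h | h
      · simp [h, hrow0 i j h]
      · simp [M, h]
    rw [hPM, hentry, Finset.mul_sum]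
    refine Finset.sum_congr rfl fun σ _ => ?_
    split_ifs <;> ring

/-- Lemma 1(i): integrality of the optimal plan.  For `{0,1}`-valued marginals
with equal total mass, the optimum of the linear program P1 is achieved by a
`{0,1}`-valued transport plan, i.e. the robots do not split on their paths to
the targets. -/
theorem exists_optimal_zero_one_plan {K : ℕ} (C : Fin K → Fin K → ℝ)
    (μ ν : Fin K → ℝ)
    (hμ : ∀ i, μ i = 0 ∨ μ i = 1) (hν : ∀ j, ν j = 0 ∨ ν j = 1)
    (hmass : ∑ i, μ i = ∑ j, ν j) :
    ∃ Pstar : Fin K → Fin K → ℝ,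
      IsTransportPlan μ ν Pstar ∧
      (∀ i j, Pstar i j = 0 ∨ Pstar i j = 1) ∧
      ∀ P : Fin K → Fin K → ℝ, IsTransportPlan μ ν P →
        (∑ i, ∑ j, Pstar i j * C i j) ≤ ∑ i, ∑ j, P i j * C i j := by
  classical
  let Q : Equiv.Perm (Fin K) → Fin K → Fin K → ℝ := fun σ i j => if σ i = j then μ i else 0
  let cost : Equiv.Perm (Fin K) → ℝ := fun σ => ∑ i, ∑ j, Q σ i j * C i j
  obtain ⟨σ₀, hσ₀⟩ := exists_perm_comp_eq μ ν hμ hν hmass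
  obtain ⟨τ, hτ, hmin⟩ := Finset.exists_min_image
    (Finset.univ.filter fun σ : Equiv.Perm (Fin K) => ∀ i, ν (σ i) = μ i) cost
    ⟨σ₀, by simpa using hσ₀⟩
  simp only [Finset.mem_filter, Finset.mem_univ, true_and] at hτ hmin
  refine ⟨Q τ, isTransportPlan_of_perm μ ν hμ τ hτ, fun i j => ?_, fun P hP => ?_⟩
  · dsimp only [Q]
    split_ifs
    · exact hμ i
    · exact Or.inl rfl
  · obtain ⟨w, hw0, hw1, hwσ, hwP⟩ := exists_perm_decomposition μ ν hμ hν hmass P hP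
    calc cost τ = ∑ σ, w σ * cost τ := by rw [← Finset.sum_mul, hw1, one_mul]
      _ ≤ ∑ σ, w σ * cost σ := by
        refine Finset.sum_le_sum fun σ _ => ?_
        rcases (hw0 σ).eq_or_lt with h | h
        · simp [← h]
        · exact mul_le_mul_of_nonneg_left (hmin σ (hwσ σ h)) h.le
      _ = ∑ i, ∑ j, P i j * C i j := by
        simp only [hwP, cost, Q, Finset.mul_sum, Finset.sum_mul]
        rw [Finset.sum_comm]
        refine Finset.sum_congr rfl fun i _ => ?_
        rw [Finset.sum_comm]
        simp only [mul_assoc]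
end

section
/- The linear-programming optimum of P1 equals the combinatorial assignment optimum: given K ∈ ℕ, a cost matrix C : Fin K → Fin K → ℝ, and μ, ν : Fin K → ℝ with every entry equal to 0 or 1 and ∑ i, μ i = ∑ j, ν j, the minimum of ∑ i j, Π i j * C i j over all transport plans Π of (μ, ν) equals the minimum over all bijections σ from S := {i : μ i = 1} to T := {j : ν j = 1} of ∑_{i ∈ S} C i (σ i). -/
lemma sum_eq_sum_support {K : ℕ} (μ : Fin K → ℝ) (f : Fin K → ℝ)
    (hf : ∀ i, μ i ≠ 1 → f i = 0) :
    ∑ i, f i = ∑ a : {i : Fin K // μ i = 1}, f a.1 := by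
  rw [← Fintype.sum_subtype_add_sum_subtype (fun i => μ i = 1) f]
  have : ∑ a : {i : Fin K // ¬ μ i = 1}, f a.1 = 0 :=
    Finset.sum_eq_zero fun a _ => hf a.1 a.2
  rw [this, add_zero]

lemma sum_eq_card_support {K : ℕ} (μ : Fin K → ℝ) (hμ : ∀ i, μ i = 0 ∨ μ i = 1) :
    ∑ i, μ i = Fintype.card {i : Fin K // μ i = 1} := by
  rw [sum_eq_sum_support μ μ fun i hi => (hμ i).resolve_right hi,
    Finset.sum_congr rfl fun (a : {i : Fin K // μ i = 1}) _ => a.2]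
  simp

lemma IsTransportPlan.eq_zero_of_row {K : ℕ} {μ ν : Fin K → ℝ} {P : Fin K → Fin K → ℝ}
    (hP : IsTransportPlan μ ν P) {i : Fin K} (hi : μ i = 0) (j : Fin K) : P i j = 0 :=
  (Finset.sum_eq_zero_iff_of_nonneg fun j _ => hP.1 i j).1 ((hP.2.1 i).trans hi) j
    (Finset.mem_univ j)

lemma IsTransportPlan.eq_zero_of_col {K : ℕ} {μ ν : Fin K → ℝ} {P : Fin K → Fin K → ℝ}
    (hP : IsTransportPlan μ ν P) {j : Fin K} (hj : ν j = 0) (i : Fin K) : P i j = 0 :=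
  (Finset.sum_eq_zero_iff_of_nonneg fun i _ => hP.1 i j).1 ((hP.2.2 j).trans hj) i
    (Finset.mem_univ i)

/-- The witness is the plan moving the unit mass at each `i` with `μ i = 1` to `σ i`. -/
lemma exists_plan_of_equiv {K : ℕ} (C : Fin K → Fin K → ℝ) (μ ν : Fin K → ℝ)
    (hμ : ∀ i, μ i = 0 ∨ μ i = 1) (hν : ∀ j, ν j = 0 ∨ ν j = 1)
    (σ : {i : Fin K // μ i = 1} ≃ {j : Fin K // ν j = 1}) :
    ∃ P : Fin K → Fin K → ℝ, IsTransportPlan μ ν P ∧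
      ∑ i, ∑ j, P i j * C i j = ∑ i : {i : Fin K // μ i = 1}, C i.1 (σ i).1 := by
  let P : Fin K → Fin K → ℝ := fun i j =>
    if h : μ i = 1 then (if (σ ⟨i, h⟩).1 = j then 1 else 0) else 0
  have hP1 : ∀ (a : {i : Fin K // μ i = 1}) j, P a.1 j = if (σ a).1 = j then 1 else 0 :=
    fun a j => by simp [P, a.2]
  have hP0 : ∀ i j, μ i ≠ 1 → P i j = 0 := fun i j h => by simp [P, h]
  refine ⟨P, ⟨fun i j => ?_, fun i => ?_, fun j => ?_⟩, ?_⟩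
  · by_cases h : μ i = 1
    · rw [hP1 ⟨i, h⟩]; split_ifs <;> norm_num
    · exact (hP0 i j h).ge
  · by_cases h : μ i = 1
    · simp [hP1 ⟨i, h⟩, h]
    · simp [hP0 i _ h, (hμ i).resolve_right h]
  · rw [sum_eq_sum_support μ _ fun i hi => hP0 i j hi]
    simp only [hP1]
    by_cases h : ν j = 1
    · rw [h, Equiv.sum_comp σ fun b => if b.1 = j then (1 : ℝ) else 0,
        Finset.sum_eq_single ⟨j, h⟩]
      · simp
      · exact fun b _ hb => if_neg fun hbj => hb (Subtype.ext hbj)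
      · simp
    · rw [(hν j).resolve_right h]
      exact Finset.sum_eq_zero fun a _ => if_neg (fun haj : (σ a).1 = j => h (haj ▸ (σ a).2))
  · rw [sum_eq_sum_support μ _ fun i hi => by simp [hP0 i _ hi]]
    simp [hP1]

/-- A lower bound for all assignment costs is a lower bound for the cost of every plan, by
Birkhoff's theorem. The bijection `e` identifies `T` with `S`. -/
lemma IsTransportPlan.le_cost {K : ℕ} (C : Fin K → Fin K → ℝ) {μ ν : Fin K → ℝ}
    (hμ : ∀ i, μ i = 0 ∨ μ i = 1) (hν : ∀ j, ν j = 0 ∨ ν j = 1)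
    (e : {i : Fin K // μ i = 1} ≃ {j : Fin K // ν j = 1}) {v : ℝ}
    (hv : ∀ σ : {i : Fin K // μ i = 1} ≃ {j : Fin K // ν j = 1},
      v ≤ ∑ i : {i : Fin K // μ i = 1}, C i.1 (σ i).1)
    {P : Fin K → Fin K → ℝ} (hP : IsTransportPlan μ ν P) :
    v ≤ ∑ i, ∑ j, P i j * C i j := by
  have hrow : ∀ i, μ i ≠ 1 → ∀ j, P i j = 0 := fun i hi =>
    hP.eq_zero_of_row ((hμ i).resolve_right hi)
  have hcol : ∀ j, ν j ≠ 1 → ∀ i, P i j = 0 := fun j hj =>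
    hP.eq_zero_of_col ((hν j).resolve_right hj)
  let M : Matrix {i : Fin K // μ i = 1} {i : Fin K // μ i = 1} ℝ := fun a b => P a.1 (e b).1
  have hM : M ∈ doublyStochastic ℝ {i : Fin K // μ i = 1} := by
    refine mem_doublyStochastic_iff_sum.2 ⟨fun a b => hP.1 _ _, fun a => ?_, fun b => ?_⟩
    · rw [Equiv.sum_comp e fun b => P a.1 b.1,
        ← sum_eq_sum_support ν (P a.1) fun j hj => hcol j hj _, hP.2.1, a.2]
    · rw [← sum_eq_sum_support μ (fun i => P i (e b).1) fun i hi => hrow i hi _, hP.2.2, (e b).2]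
  obtain ⟨w, hw0, hw1, hwM⟩ := exists_eq_sum_perm_of_mem_doublyStochastic hM
  have hcost : ∑ i, ∑ j, P i j * C i j = ∑ a, ∑ b, M a b * C a.1 (e b).1 := by
    rw [sum_eq_sum_support μ _ fun i hi => by simp [hrow i hi]]
    refine Finset.sum_congr rfl fun a _ => ?_
    rw [sum_eq_sum_support ν _ fun j hj => by simp [hcol j hj],
      ← Equiv.sum_comp e fun b => P a.1 b.1 * C a.1 b.1]
  have hperm : ∀ a b, M a b = ∑ τ, w τ * (if τ a = b then 1 else 0) := fun a b => by
    rw [← hwM]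
    simp [Matrix.sum_apply, Equiv.Perm.permMatrix, PEquiv.toMatrix_apply, eq_comm]
  have hconv : ∑ a, ∑ b, M a b * C a.1 (e b).1 = ∑ τ, w τ * ∑ a, C a.1 (e (τ a)).1 := by
    simp only [hperm, Finset.sum_mul, Finset.mul_sum]
    refine Eq.trans (Finset.sum_congr rfl fun a _ => ?_) Finset.sum_comm
    rw [Finset.sum_comm]
    simp
  rw [hcost, hconv]
  calc v = ∑ τ, w τ * v := by rw [← Finset.sum_mul, hw1, one_mul]
    _ ≤ _ := Finset.sum_le_sum fun τ _ => mul_le_mul_of_nonneg_left (hv (τ.trans e)) (hw0 τ)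

/-- The linear-programming optimum of P1 equals the combinatorial assignment
optimum: for `{0,1}`-valued marginals with equal total mass, the minimum cost
over all transport plans equals the minimum over all bijections
`σ : {i : μ i = 1} ≃ {j : ν j = 1}` of `∑ i, C i (σ i)`. -/
theorem lp_optimum_eq_assignment_optimum {K : ℕ} (C : Fin K → Fin K → ℝ)
    (μ ν : Fin K → ℝ)
    (hμ : ∀ i, μ i = 0 ∨ μ i = 1) (hν : ∀ j, ν j = 0 ∨ ν j = 1)
    (hmass : ∑ i, μ i = ∑ j, ν j) :
    ∃ v : ℝ,
      IsLeast {c : ℝ | ∃ P : Fin K → Fin K → ℝ,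
        IsTransportPlan μ ν P ∧ (∑ i, ∑ j, P i j * C i j) = c} v ∧
      IsLeast {c : ℝ | ∃ σ : {i : Fin K // μ i = 1} ≃ {j : Fin K // ν j = 1},
        (∑ i : {i : Fin K // μ i = 1}, C i.1 (σ i).1) = c} v := by
  have hcard : Fintype.card {i : Fin K // μ i = 1} = Fintype.card {j : Fin K // ν j = 1} := by
    exact_mod_cast (sum_eq_card_support μ hμ).symm.trans (hmass.trans (sum_eq_card_support ν hν))
  have e := Fintype.equivOfCardEq hcard
  have : Nonempty ({i : Fin K // μ i = 1} ≃ {j : Fin K // ν j = 1}) := ⟨e⟩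
  obtain ⟨σ, hσ⟩ := Finite.exists_min
    fun σ : {i : Fin K // μ i = 1} ≃ {j : Fin K // ν j = 1} =>
      ∑ i : {i : Fin K // μ i = 1}, C i.1 (σ i).1
  refine ⟨_, ⟨exists_plan_of_equiv C μ ν hμ hν σ, ?_⟩, ⟨⟨σ, rfl⟩, ?_⟩⟩
  · rintro _ ⟨P, hP, rfl⟩
    exact hP.le_cost C hμ hν e hσ
  · rintro _ ⟨τ, rfl⟩
    exact hσ τ
end

section
/- Integrality for the unbalanced problem P2: given K ∈ ℕ, a cost matrix C : Fin K → Fin K → ℝ, and μ, ν : Fin K → ℝ with every entry equal to 0 or 1, let m := min (∑ i, μ i) (∑ j, ν j). Then there exists a sub-plan Π* of (μ, ν) all of whose entries are 0 or 1, with exactly m entries equal to 1 (so ∑ i j, Π* i j = m), each row and each column of Π* containing at most one entry equal to 1, and whose cost is less than or equal to the cost of every sub-plan Π of (μ, ν) with ∑ i j, Π i j = m. -/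
/-!
Assume `∑ μ ≤ ∑ ν`; the other case follows by transposing. A sub-plan of mass `∑ μ` then has row
sums exactly `μ`, and spreading the column deficits uniformly over the rows with `μ i = 0` completes
it to a doubly stochastic matrix that agrees with it on the rows with `μ i = 1`. By Birkhoff's
theorem this matrix is a convex combination of permutation matrices. Every permutation `σ` of
positive weight sends the support of `μ` into the support of `ν`, because the original plan is
positive at `(i, σ i)` whenever `μ i = 1`. The cost of the plan is the average of the costs
`∑ i, μ i * C i (σ i)`, so one such `σ` costs no more than the plan
(`exists_perm_cost_le`). Applied to the uniform plan this shows that admissible permutations exist,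
and a cheapest one among these finitely many, restricted to the support of `μ`, is the required
plan (`integrality_of_sum_le`).
-/

/-- A sub-plan of `(μ, ν)`: a nonnegative matrix whose `i`-th row sum is at
most `μ i` and whose `j`-th column sum is at most `ν j`. -/
def IsSubPlan {K : ℕ} (μ ν : Fin K → ℝ) (P : Fin K → Fin K → ℝ) : Prop :=
  (∀ i j, 0 ≤ P i j) ∧ (∀ i, ∑ j, P i j ≤ μ i) ∧ (∀ j, ∑ i, P i j ≤ ν j)

/-- The doubly stochastic completion of a plan with row sums `μ`: each column's deficit is spread
uniformly over the rows with `μ i = 0`. If there is no such row, all deficits vanish and the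
division by zero is harmless. -/
lemma completion_mem_doublyStochastic {K : ℕ} {μ ν : Fin K → ℝ} {P : Fin K → Fin K → ℝ}
    (hμ : ∀ i, μ i = 0 ∨ μ i = 1) (hν : ∀ j, ν j = 0 ∨ ν j = 1) (hP : IsSubPlan μ ν P)
    (hrow : ∀ i, ∑ j, P i j = μ i) :
    (Matrix.of fun i j => P i j + (1 - μ i) * ((1 - ∑ k, P k j) / ∑ k, (1 - μ k))) ∈
      doublyStochastic ℝ (Fin K) := by
  obtain ⟨hnn, -, hcol⟩ := hP
  have hμ1 : ∀ i, 0 ≤ 1 - μ i := fun i => by rcases hμ i with h | h <;> simp [h]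
  have hd : ∀ j, 0 ≤ 1 - ∑ k, P k j := fun j => by
    rcases hν j with h | h <;> linarith [hcol j]
  have hsum : ∑ j, (1 - ∑ k, P k j) = ∑ k, (1 - μ k) := by
    rw [Finset.sum_sub_distrib, Finset.sum_sub_distrib, Finset.sum_comm]
    simp [hrow]
  have hs : 0 ≤ ∑ k, (1 - μ k) := Finset.sum_nonneg fun k _ => hμ1 k
  rw [mem_doublyStochastic_iff_sum]
  refine ⟨fun i j => ?_, fun i => ?_, fun j => ?_⟩
  · exact add_nonneg (hnn i j) (mul_nonneg (hμ1 i) (div_nonneg (hd j) hs))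
  · simp only [Matrix.of_apply]
    rw [Finset.sum_add_distrib, hrow, ← Finset.mul_sum, ← Finset.sum_div, hsum]
    rcases hs.eq_or_lt with h | h
    · have := (Finset.sum_eq_zero_iff_of_nonneg fun k _ => hμ1 k).1 h.symm i (Finset.mem_univ i)
      rw [this]; linarith
    · rw [div_self h.ne']; ring
  · simp only [Matrix.of_apply]
    rw [Finset.sum_add_distrib, ← Finset.sum_mul]
    rcases hs.eq_or_lt with h | h
    · rw [← h] at hsum
      have := (Finset.sum_eq_zero_iff_of_nonneg fun k _ => hd k).1 hsum j (Finset.mem_univ j)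
      rw [this, zero_div, mul_zero]; linarith
    · rw [mul_div_cancel₀ _ h.ne']; ring

/-- Any plan of mass `∑ μ` is dominated in cost by a permutation that maps the support of `μ` into
the support of `ν`. -/
lemma exists_perm_cost_le {K : ℕ} (C : Fin K → Fin K → ℝ) {μ ν : Fin K → ℝ}
    {P : Fin K → Fin K → ℝ}
    (hμ : ∀ i, μ i = 0 ∨ μ i = 1) (hν : ∀ j, ν j = 0 ∨ ν j = 1) (hP : IsSubPlan μ ν P)
    (hmass : ∑ i, ∑ j, P i j = ∑ i, μ i) :
    ∃ σ : Equiv.Perm (Fin K), (∀ i, μ i = 1 → ν (σ i) = 1) ∧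
      ∑ i, μ i * C i (σ i) ≤ ∑ i, ∑ j, P i j * C i j := by
  have hrow : ∀ i, ∑ j, P i j = μ i := fun i =>
    (Finset.sum_eq_sum_iff_of_le fun i _ => hP.2.1 i).1 hmass i (Finset.mem_univ i)
  obtain ⟨w, hw0, hw1, hw⟩ := exists_eq_sum_perm_of_mem_doublyStochastic
    (completion_mem_doublyStochastic hμ hν hP hrow)
  -- On the rows with `μ i = 1` the completion is `P`; on the others `P` vanishes.
  have hPw : ∀ i j, P i j = ∑ σ : Equiv.Perm (Fin K), w σ * (if σ i = j then μ i else 0) := by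
    intro i j
    have h := congrFun (congrFun hw i) j
    rcases hμ i with hi | hi
    · have h0 := (Finset.sum_eq_zero_iff_of_nonneg fun j _ => hP.1 i j).1
        ((hrow i).trans hi) j (Finset.mem_univ j)
      simp [h0, hi]
    · simp only [Matrix.sum_apply, Matrix.smul_apply, Matrix.of_apply, hi, sub_self, zero_mul,
        add_zero, smul_eq_mul, Equiv.Perm.permMatrix, PEquiv.toMatrix_apply,
        Equiv.toPEquiv_apply, Option.mem_def, Option.some.injEq] at h
      rw [← h, hi]
  have hcost : ∑ i, ∑ j, P i j * C i j =
      ∑ σ : Equiv.Perm (Fin K), w σ * ∑ i, μ i * C i (σ i) := by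
    simp_rw [hPw, Finset.sum_mul, Finset.mul_sum]
    rw [Finset.sum_comm (s := (Finset.univ : Finset (Equiv.Perm (Fin K))))]
    refine Finset.sum_congr rfl fun i _ => ?_
    rw [Finset.sum_comm]
    refine Finset.sum_congr rfl fun σ _ => ?_
    simp [mul_assoc]
  have hadm : ∀ σ, 0 < w σ → ∀ i, μ i = 1 → ν (σ i) = 1 := by
    intro σ hσ i hi
    have hpos : 0 < P i (σ i) := by
      rw [hPw]
      refine Finset.sum_pos' (fun τ _ => mul_nonneg (hw0 τ) ?_) ⟨σ, Finset.mem_univ σ, ?_⟩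
      · split_ifs <;> simp [hi]
      · simpa [hi] using hσ
    have hle : P i (σ i) ≤ ∑ k, P k (σ i) :=
      Finset.single_le_sum (f := fun k => P k (σ i)) (fun k _ => hP.1 k _) (Finset.mem_univ i)
    rcases hν (σ i) with h | h
    · linarith [hP.2.2 (σ i)]
    · exact h
  by_contra! hcon
  set c := ∑ i, ∑ j, P i j * C i j
  have hnn : ∀ σ ∈ Finset.univ, 0 ≤ w σ * (∑ i, μ i * C i (σ i) - c) := by
    intro σ _
    rcases (hw0 σ).eq_or_lt with h | h
    · simp [← h]
    · exact mul_nonneg h.le (sub_nonneg.2 (hcon σ (hadm σ h)).le)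
  have hzero : ∑ σ, w σ * (∑ i, μ i * C i (σ i) - c) = 0 := by
    simp_rw [mul_sub]
    rw [Finset.sum_sub_distrib, ← Finset.sum_mul, hw1, ← hcost]; ring
  have hw' : ∀ σ, w σ = 0 := by
    intro σ
    by_contra h
    have hσ := lt_of_le_of_ne (hw0 σ) (Ne.symm h)
    have := (Finset.sum_eq_zero_iff_of_nonneg hnn).1 hzero σ (Finset.mem_univ σ)
    have h2 := mul_pos hσ (sub_pos.2 (hcon σ (hadm σ hσ)))
    linarith
  simp [hw'] at hw1

/-- The theorem in the case where `μ` is the smaller marginal. -/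
lemma integrality_of_sum_le {K : ℕ} (C : Fin K → Fin K → ℝ)
    (μ ν : Fin K → ℝ)
    (hμ : ∀ i, μ i = 0 ∨ μ i = 1) (hν : ∀ j, ν j = 0 ∨ ν j = 1)
    (hle : ∑ i, μ i ≤ ∑ j, ν j) :
    ∃ Pstar : Fin K → Fin K → ℝ, IsSubPlan μ ν Pstar ∧
      (∀ i j, Pstar i j = 0 ∨ Pstar i j = 1) ∧
      (∑ i, ∑ j, Pstar i j) = ∑ i, μ i ∧
      (∀ i j₁ j₂, Pstar i j₁ = 1 → Pstar i j₂ = 1 → j₁ = j₂) ∧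
      (∀ i₁ i₂ j, Pstar i₁ j = 1 → Pstar i₂ j = 1 → i₁ = i₂) ∧
      ∀ P : Fin K → Fin K → ℝ, IsSubPlan μ ν P →
        (∑ i, ∑ j, P i j) = ∑ i, μ i →
        (∑ i, ∑ j, Pstar i j * C i j) ≤ ∑ i, ∑ j, P i j * C i j := by
  classical
  have hμ0 : ∀ i, 0 ≤ μ i := fun i => by rcases hμ i with h | h <;> simp [h]
  have hν0 : ∀ j, 0 ≤ ν j := fun j => by rcases hν j with h | h <;> simp [h]
  have hs : 0 ≤ ∑ i, μ i := Finset.sum_nonneg fun i _ => hμ0 i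
  have ht : 0 ≤ ∑ j, ν j := hs.trans hle
  let S : Finset (Equiv.Perm (Fin K)) := {σ | ∀ i, μ i = 1 → ν (σ i) = 1}
  have hS : S.Nonempty := by
    -- The uniform plan; if `∑ ν = 0` then `μ = 0` and the plan is zero.
    have hrow : ∀ i, ∑ j, μ i * (ν j / ∑ k, ν k) = μ i := by
      intro i
      rw [← Finset.mul_sum, ← Finset.sum_div]
      rcases ht.eq_or_lt with h | h
      · have := (Finset.sum_eq_zero_iff_of_nonneg fun k _ => hμ0 k).1
          (le_antisymm (hle.trans h.ge) hs) i (Finset.mem_univ i)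
        simp [this]
      · rw [div_self h.ne', mul_one]
    have hU : IsSubPlan μ ν fun i j => μ i * (ν j / ∑ k, ν k) := by
      refine ⟨fun i j => mul_nonneg (hμ0 i) (div_nonneg (hν0 j) ht), fun i => (hrow i).le,
        fun j => ?_⟩
      rw [← Finset.sum_mul, mul_div_left_comm]
      exact mul_le_of_le_one_right (hν0 j) (div_le_one_of_le₀ hle ht)
    obtain ⟨σ, hσ, -⟩ := exists_perm_cost_le C hμ hν hU (Finset.sum_congr rfl fun i _ => hrow i)
    exact ⟨σ, by simpa [S] using hσ⟩
  obtain ⟨σ, hσS, hσmin⟩ := S.exists_min_image (fun σ => ∑ i, μ i * C i (σ i)) hS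
  have hσ : ∀ i, μ i = 1 → ν (σ i) = 1 := by simpa [S] using hσS
  have hone : ∀ i j, (if σ i = j then μ i else 0) = 1 → σ i = j := by
    intro i j h
    by_contra hne
    simp [hne] at h
  refine ⟨fun i j => if σ i = j then μ i else 0, ⟨fun i j => ?_, fun i => ?_, fun j => ?_⟩,
    fun i j => ?_, ?_, fun i j₁ j₂ h₁ h₂ => ?_, fun i₁ i₂ j h₁ h₂ => ?_, fun P hP hm => ?_⟩
  · dsimp only
    split_ifs
    exacts [hμ0 i, le_rfl]
  · simp
  · have h : ∑ i, (if σ i = j then μ i else 0) = μ (σ.symm j) := by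
      simp [← Equiv.eq_symm_apply]
    rw [h]
    rcases hμ (σ.symm j) with h0 | h1
    · rw [h0]; exact hν0 j
    · have := hσ _ h1
      rw [Equiv.apply_symm_apply] at this
      rw [h1, this]
  · dsimp only
    split_ifs
    exacts [hμ i, Or.inl rfl]
  · simp
  · exact (hone _ _ h₁).symm.trans (hone _ _ h₂)
  · exact σ.injective ((hone _ _ h₁).trans (hone _ _ h₂).symm)
  · obtain ⟨τ, hτ, hcost⟩ := exists_perm_cost_le C hμ hν hP hm
    have h := hσmin τ (by simpa [S] using hτ)
    simpa using h.trans hcost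


/-- Integrality for the unbalanced problem P2: for `{0,1}`-valued marginals
and `m = min (∑ μ) (∑ ν)`, there is a `{0,1}`-valued sub-plan of total mass
`m` (hence with exactly `m` entries equal to `1`), with at most one `1` in
each row and each column, whose cost is minimal among all sub-plans of total
mass `m`. -/
theorem unbalanced_integrality {K : ℕ} (C : Fin K → Fin K → ℝ)
    (μ ν : Fin K → ℝ)
    (hμ : ∀ i, μ i = 0 ∨ μ i = 1) (hν : ∀ j, ν j = 0 ∨ ν j = 1) :
    ∃ Pstar : Fin K → Fin K → ℝ, IsSubPlan μ ν Pstar ∧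
      (∀ i j, Pstar i j = 0 ∨ Pstar i j = 1) ∧
      (∑ i, ∑ j, Pstar i j) = min (∑ i, μ i) (∑ j, ν j) ∧
      (∀ i j₁ j₂, Pstar i j₁ = 1 → Pstar i j₂ = 1 → j₁ = j₂) ∧
      (∀ i₁ i₂ j, Pstar i₁ j = 1 → Pstar i₂ j = 1 → i₁ = i₂) ∧
      ∀ P : Fin K → Fin K → ℝ, IsSubPlan μ ν P →
        (∑ i, ∑ j, P i j) = min (∑ i, μ i) (∑ j, ν j) →
        (∑ i, ∑ j, Pstar i j * C i j) ≤ ∑ i, ∑ j, P i j * C i j := by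
  rcases le_total (∑ i, μ i) (∑ j, ν j) with h | h
  · rw [min_eq_left h]
    exact integrality_of_sum_le C μ ν hμ hν h
  · rw [min_eq_right h]
    obtain ⟨Q, hQ, h01, hm, hr, hc, hopt⟩ :=
      integrality_of_sum_le (fun i j => C j i) ν μ hν hμ h
    refine ⟨fun i j => Q j i, ⟨fun i j => hQ.1 j i, hQ.2.2, hQ.2.1⟩, fun i j => h01 j i, ?_,
      fun i j₁ j₂ => hc j₁ j₂ i, fun i₁ i₂ j => hr j i₁ i₂, fun P hP hPm => ?_⟩
    · rw [Finset.sum_comm]; exact hm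
    · have := hopt (fun i j => P j i) ⟨fun i j => hP.1 j i, hP.2.2, hP.2.1⟩
        (by rw [Finset.sum_comm]; exact hPm)
      rw [Finset.sum_comm, Finset.sum_comm (f := fun i j => P i j * C i j)]
      exact this
end
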